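/- Let Ω be a bounded open convex domain in ℝⁿ (n ≥ 2). Suppose F : Ω × (−∞,0) → ℝ is continuous and non-decreasing in its second argument, and there are constants A > 0, α ≥ 0, β ≥ n+1 with β < α + 2n − 1 such that 0 < F(x,t) ≤ A·d_x^{β−n−1}·|t|^{−α} for all x ∈ Ω and t < 0. If u is a classical solution of det D²u = F(x,u) in Ω with u = 0 on ∂Ω, then there is a constant C depending only on α, β, A, diam Ω and n such that |u(y)| ≤ C·d_y^{(β−n+1)/(n+α)} for every y ∈ Ω. -/

import Mathlib

/-- The determinant of the Hessian matrix of `u` at `x`. -/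
noncomputable def hessianDet {n : ℕ} (u : EuclideanSpace ℝ (Fin n) → ℝ)
    (x : EuclideanSpace ℝ (Fin n)) : ℝ :=
  (Matrix.of fun i j : Fin n =>
    iteratedFDeriv ℝ 2 u x ![EuclideanSpace.single i (1 : ℝ), EuclideanSpace.single j (1 : ℝ)]).det

/-- `u` is a classical solution of `det D²u = F(x,u)` in `Ω`, `u = 0` on `∂Ω`:
continuous on the closure, convex, `C²` and negative inside. -/
def IsClassicalSolution {n : ℕ} (Ω : Set (EuclideanSpace ℝ (Fin n)))
    (F : EuclideanSpace ℝ (Fin n) → ℝ → ℝ) (u : EuclideanSpace ℝ (Fin n) → ℝ) : Prop :=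
  ContinuousOn u (closure Ω) ∧ ConvexOn ℝ Ω u ∧ ContDiffOn ℝ 2 u Ω ∧
    (∀ x ∈ Ω, u x < 0) ∧ (∀ x ∈ frontier Ω, u x = 0) ∧
    ∀ x ∈ Ω, hessianDet u x = F x (u x)

/-- `F` is continuous on `Ω × (-∞,0)`, non-decreasing in its second argument, and satisfies
`0 < F(x,t) ≤ A d_x^{β-n-1} |t|^{-α}`. -/
def SatisfiesFCond {n : ℕ} (Ω : Set (EuclideanSpace ℝ (Fin n)))
    (F : EuclideanSpace ℝ (Fin n) → ℝ → ℝ) (A α β : ℝ) : Prop :=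
  ContinuousOn (fun p : EuclideanSpace ℝ (Fin n) × ℝ => F p.1 p.2) (Ω ×ˢ Set.Iio (0 : ℝ)) ∧
    (∀ x ∈ Ω, ∀ s t : ℝ, s ≤ t → t < 0 → F x s ≤ F x t) ∧
    ∀ x ∈ Ω, ∀ t : ℝ, t < 0 →
      0 < F x t ∧ F x t ≤ A * Metric.infDist x (frontier Ω) ^ (β - n - 1) * |t| ^ (-α)

/-!
For `y ∈ Ω` let `p` be a nearest boundary point and `e` the inner unit normal of a supporting
hyperplane at `p`, so that `ℓ(x) = ⟪e, x - p⟫` satisfies `d_x ≤ ℓ(x)` on `Ω` and `ℓ(y) ≤ d_y`. Put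
`γ = (β - n + 1) / (n + α)`, which lies in `(0, 1)`, and `w = -M ℓ ^ γ (K - |x_⊥|²)`, where `x_⊥` is
the component of `x - p` orthogonal to `e`. For `K` large, `D²w` is at least `M ℓ ^ (γ - 2)` along
`e` and `M ℓ ^ γ` across it. At a negative interior minimum of `u - w` we would have `D²u ≥ D²w`,
hence `det D²u ≥ M ^ n ℓ ^ (n γ - 2)`; by the choice of `γ` this has the same homogeneity in `ℓ` as
the upper bound `A ℓ ^ (β - n - 1) (M ℓ ^ γ) ^ (-α)`, and exceeds it once `M > A` and `M ≥ 1`.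
Therefore `w ≤ u`, and evaluating at `y` gives the claim.
-/

open scoped RealInnerProductSpace

lemma norm_sq_eq_inner_sq_add_norm_sq {E : Type*} [NormedAddCommGroup E] [InnerProductSpace ℝ E]
    {e : E} (he : ‖e‖ = 1) (v : E) :
    ‖v‖ ^ 2 = ⟪e, v⟫ ^ 2 + ‖(ℝ ∙ e)ᗮ.starProjection v‖ ^ 2 := by
  rw [Submodule.norm_sq_eq_add_norm_sq_starProjection v (ℝ ∙ e),
    Submodule.starProjection_unit_singleton ℝ he, norm_smul, he, mul_one, Real.norm_eq_abs, sq_abs]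

section Determinant

open Matrix

lemma dotProduct_eq_real_inner {ι : Type*} [Fintype ι] (v w : EuclideanSpace ℝ ι) :
    v ⬝ᵥ w = ⟪v, w⟫ := by
  rw [EuclideanSpace.inner_eq_star_dotProduct, star_trivial, dotProduct_comm]

section Monotonicity

open scoped ComplexOrder MatrixOrder

variable {ι 𝕜 : Type*} [Fintype ι] [DecidableEq ι] [RCLike 𝕜]

lemma one_le_det_of_posSemidef_sub_one {C : Matrix ι ι 𝕜} (hC : (C - 1).PosSemidef) :
    1 ≤ C.det := by
  have hherm : C.IsHermitian := by simpa using hC.isHermitian.add isHermitian_one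
  have one_le_eigenvalues (i : ι) : 1 ≤ hherm.eigenvalues i := by
    have hform := hC.re_dotProduct_nonneg (hherm.eigenvectorBasis i)
    have hunit : hherm.eigenvectorBasis i ⬝ᵥ star (hherm.eigenvectorBasis i).ofLp = (1 : 𝕜) := by
      simp [← EuclideanSpace.inner_eq_star_dotProduct]
    rw [sub_mulVec, dotProduct_sub, one_mulVec, map_sub, ← hherm.eigenvalues_eq,
      dotProduct_comm, hunit, RCLike.one_re] at hform
    exact sub_nonneg.mp hform
  have hprod : 1 ≤ ∏ i, hherm.eigenvalues i := Finset.one_le_prod fun i _ => one_le_eigenvalues i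
  rw [hherm.det_eq_prod_eigenvalues]
  exact_mod_cast hprod

lemma det_le_det_of_posSemidef {A B : Matrix ι ι 𝕜} (hA : A.PosSemidef)
    (hAB : (B - A).PosSemidef) : A.det ≤ B.det := by
  rcases eq_or_ne A.det 0 with hdet | hdet
  · rw [hdet]
    simpa using (hA.add hAB).det_nonneg
  obtain ⟨S, rfl⟩ := CStarAlgebra.nonneg_iff_eq_star_mul_self.mp hA.nonneg
  have hS : IsUnit S.det := by
    rw [det_mul] at hdet
    exact (right_ne_zero_of_mul hdet).isUnit
  have hSS : S * S⁻¹ = 1 := mul_nonsing_inv S hS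
  have hone : (S⁻¹ᴴ * B * S⁻¹ - 1).PosSemidef := by
    have hcongr : S⁻¹ᴴ * (star S * S) * S⁻¹ = 1 := by
      rw [star_eq_conjTranspose, ← Matrix.mul_assoc, Matrix.mul_assoc _ S, hSS, Matrix.mul_one,
        ← conjTranspose_mul, hSS, conjTranspose_one]
    simpa only [Matrix.mul_sub, Matrix.sub_mul, hcongr] using hAB.conjTranspose_mul_mul_same S⁻¹
  calc (star S * S).det = (star S * S).det * 1 := (mul_one _).symm
    _ ≤ (star S * S).det * (S⁻¹ᴴ * B * S⁻¹).det :=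
      mul_le_mul_of_nonneg_left (one_le_det_of_posSemidef_sub_one hone) hA.det_nonneg
    _ = (S * S⁻¹)ᴴ.det * B.det * (S * S⁻¹).det := by
      simp only [star_eq_conjTranspose, conjTranspose_mul, det_mul]
      ring
    _ = B.det := by rw [hSS, conjTranspose_one, det_one, one_mul, mul_one]

end Monotonicity

section AxialMatrix

variable {ι : Type*} [DecidableEq ι]

/-- The symmetric matrix with eigenvalue `a` on the line spanned by the unit vector `e` and
eigenvalue `b` on its orthogonal complement. -/
def axialMatrix (e : EuclideanSpace ℝ ι) (a b : ℝ) : Matrix ι ι ℝ :=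
  b • 1 + (a - b) • vecMulVec e e

variable {e : EuclideanSpace ℝ ι} {a b : ℝ}

lemma isHermitian_axialMatrix : (axialMatrix e a b).IsHermitian :=
  .ext fun i j => by simp [axialMatrix, vecMulVec_apply, one_apply, eq_comm, mul_comm (e i)]

variable [Fintype ι]

lemma dotProduct_axialMatrix_mulVec (he : ‖e‖ = 1) (v : EuclideanSpace ℝ ι) :
    v ⬝ᵥ axialMatrix e a b *ᵥ v = a * ⟪e, v⟫ ^ 2 + b * ‖(ℝ ∙ e)ᗮ.starProjection v‖ ^ 2 := by
  have hexpand : v ⬝ᵥ axialMatrix e a b *ᵥ v = b * ‖v‖ ^ 2 + (a - b) * ⟪e, v⟫ ^ 2 := by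
    simp only [axialMatrix, add_mulVec, smul_mulVec, one_mulVec, vecMulVec_mulVec, dotProduct_add,
      dotProduct_smul, dotProduct_eq_real_inner, real_inner_self_eq_norm_sq, real_inner_comm,
      smul_eq_mul, op_smul_eq_smul, sq]
  rw [hexpand, norm_sq_eq_inner_sq_add_norm_sq he]
  ring

lemma posSemidef_axialMatrix (he : ‖e‖ = 1) (ha : 0 ≤ a) (hb : 0 ≤ b) :
    (axialMatrix e a b).PosSemidef :=
  .of_dotProduct_mulVec_nonneg isHermitian_axialMatrix fun v => by
    rw [star_trivial, dotProduct_axialMatrix_mulVec he (WithLp.toLp 2 v)]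
    positivity

lemma det_axialMatrix (he : ‖e‖ = 1) (hb : b ≠ 0) :
    (axialMatrix e a b).det = a * b ^ (Fintype.card ι - 1) := by
  have hee : e ⬝ᵥ e = 1 := by
    rw [dotProduct_eq_real_inner, real_inner_self_eq_norm_sq, he, one_pow]
  have hfactor : axialMatrix e a b =
      b • (1 + replicateCol Unit (((a - b) / b) • e.ofLp) * replicateRow Unit e) := by
    rw [← vecMulVec_eq, smul_vecMulVec, smul_add, smul_smul, mul_div_cancel₀ _ hb, axialMatrix]
  have hcard : Fintype.card ι ≠ 0 := by
    rintro hzero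
    have := Fintype.card_eq_zero_iff.mp hzero
    simp [Subsingleton.elim e 0] at he
  rw [hfactor, det_smul, det_one_add_replicateCol_mul_replicateRow, dotProduct_smul, hee,
    ← mul_pow_sub_one hcard, smul_eq_mul]
  field_simp
  ring

end AxialMatrix

end Determinant

section SecondDerivative

open Filter Topology

lemma deriv_deriv_nonneg_of_isLocalMin {f : ℝ → ℝ} {a : ℝ} (hmin : IsLocalMin f a)
    (hf : ContinuousAt f a) : 0 ≤ deriv (deriv f) a := by
  by_contra! hneg
  have hmax : IsLocalMax f a := isLocalMax_of_deriv_deriv_neg hneg hmin.deriv_eq_zero hf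
  have hconst : f =ᶠ[𝓝 a] fun _ => f a := by
    filter_upwards [hmin, hmax] with t hle hge using le_antisymm hge hle
  have hzero : deriv (deriv f) a = 0 := by simpa using hconst.deriv.deriv_eq
  exact hneg.ne hzero

variable {E : Type*} [NormedAddCommGroup E] [NormedSpace ℝ E]

lemma deriv_deriv_comp_add_smul {f : E → ℝ} {x : E} (hf : ContDiffAt ℝ 2 f x) (v : E) :
    deriv (deriv fun t : ℝ => f (x + t • v)) 0 = fderiv ℝ (fderiv ℝ f) x v v := by
  have hline (t : ℝ) : HasDerivAt (fun t : ℝ => x + t • v) v t := by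
    simpa using ((hasDerivAt_id t).smul_const v).const_add x
  have hline_zero : Tendsto (fun t : ℝ => x + t • v) (𝓝 0) (𝓝 x) := by
    simpa using (hline 0).continuousAt.tendsto
  have hfirst : deriv (fun t : ℝ => f (x + t • v)) =ᶠ[𝓝 0] fun t => fderiv ℝ f (x + t • v) v := by
    filter_upwards [hline_zero.eventually (hf.eventually (by simp))] with t ht
    exact ((ht.differentiableAt (by simp)).hasFDerivAt.comp_hasDerivAt t (hline t)).deriv
  have hfderiv : HasFDerivAt (fderiv ℝ f) (fderiv ℝ (fderiv ℝ f) x) (x + (0 : ℝ) • v) := by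
    rw [zero_smul, add_zero]
    exact ((hf.fderiv_right (m := 1) (by norm_num)).differentiableAt one_ne_zero).hasFDerivAt
  have hsecond : HasDerivAt (fun t : ℝ => fderiv ℝ f (x + t • v)) (fderiv ℝ (fderiv ℝ f) x v) 0 :=
    hfderiv.comp_hasDerivAt (0 : ℝ) (hline 0)
  rw [hfirst.deriv_eq, (hsecond.clm_apply (hasDerivAt_const (0 : ℝ) v)).deriv, map_zero, add_zero]

lemma fderiv_fderiv_le_of_isLocalMin_sub {u w : E → ℝ} {x : E} (hu : ContDiffAt ℝ 2 u x)
    (hw : ContDiffAt ℝ 2 w x) (hmin : IsLocalMin (u - w) x) (v : E) :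
    fderiv ℝ (fderiv ℝ w) x v v ≤ fderiv ℝ (fderiv ℝ u) x v v := by
  have hdiff : ContDiffAt ℝ 2 (u - w) x := hu.sub hw
  have hline : ContinuousAt (fun t : ℝ => x + t • v) 0 := by fun_prop
  have hx : x + (0 : ℝ) • v = x := by simp
  have hnonneg : 0 ≤ fderiv ℝ (fderiv ℝ (u - w)) x v v := by
    rw [← deriv_deriv_comp_add_smul hdiff]
    exact deriv_deriv_nonneg_of_isLocalMin
      (IsLocalMin.comp_continuous (hx.symm ▸ hmin) hline)
      (ContinuousAt.comp (hx.symm ▸ hdiff.continuousAt) hline)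
  have hsub : fderiv ℝ (fderiv ℝ (u - w)) x v v =
      fderiv ℝ (fderiv ℝ u) x v v - fderiv ℝ (fderiv ℝ w) x v v := by
    simpa [iteratedFDeriv_two_apply] using
      DFunLike.congr_fun (iteratedFDeriv_sub_apply hu hw) ![v, v]
  exact sub_nonneg.mp (hsub ▸ hnonneg)

lemma le_of_forall_exists_fderiv_fderiv_lt [ProperSpace E] {Ω : Set E} (hΩ : IsOpen Ω)
    (hbdd : Bornology.IsBounded Ω) {u w : E → ℝ} (hu : ContinuousOn u (closure Ω))
    (hw : ContinuousOn w (closure Ω)) (hu2 : ContDiffOn ℝ 2 u Ω) (hw2 : ContDiffOn ℝ 2 w Ω)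
    (hfrontier : ∀ x ∈ frontier Ω, w x ≤ u x)
    (hlt : ∀ x ∈ Ω, u x < w x →
      ∃ v, fderiv ℝ (fderiv ℝ u) x v v < fderiv ℝ (fderiv ℝ w) x v v) :
    ∀ x ∈ Ω, w x ≤ u x := by
  intro x hx
  obtain ⟨z, hz, hzmin⟩ := hbdd.isCompact_closure.exists_isMinOn ⟨x, subset_closure hx⟩ (hu.sub hw)
  suffices h : w z ≤ u z from
    sub_nonneg.mp ((sub_nonneg.mpr h).trans (hzmin (subset_closure hx)))
  by_contra! hneg
  have hzΩ : z ∈ Ω := by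
    by_contra hzΩ
    exact hneg.not_ge (hfrontier z (hΩ.frontier_eq ▸ ⟨hz, hzΩ⟩))
  have hnhds : Ω ∈ 𝓝 z := hΩ.mem_nhds hzΩ
  obtain ⟨v, hv⟩ := hlt z hzΩ hneg
  exact hv.not_ge (fderiv_fderiv_le_of_isLocalMin_sub (hu2.contDiffAt hnhds) (hw2.contDiffAt hnhds)
    ((hzmin.on_subset subset_closure).isLocalMin hnhds) v)

end SecondDerivative

section HessianDeterminant

open Matrix

variable {n : ℕ} {u : EuclideanSpace ℝ (Fin n) → ℝ} {x e : EuclideanSpace ℝ (Fin n)} {a b : ℝ}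

/-- The Hessian matrix of `u` at `x`, as the matrix of the bilinear form `D²u(x)` in the standard
basis; its determinant is `hessianDet u x`. -/
noncomputable def hessianMatrix (u : EuclideanSpace ℝ (Fin n) → ℝ) (x : EuclideanSpace ℝ (Fin n)) :
    Matrix (Fin n) (Fin n) ℝ :=
  LinearMap.BilinForm.toMatrix (EuclideanSpace.basisFun (Fin n) ℝ).toBasis
    (fderiv ℝ (fderiv ℝ u) x).toLinearMap₁₂

lemma det_hessianMatrix : (hessianMatrix u x).det = hessianDet u x := by
  refine congrArg det (Matrix.ext fun i j => ?_)
  simp [hessianMatrix, iteratedFDeriv_two_apply]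

lemma isHermitian_hessianMatrix (hu : ContDiffAt ℝ 2 u x) : (hessianMatrix u x).IsHermitian :=
  .ext fun i j => by
    simpa [hessianMatrix] using (hu.isSymmSndFDerivAt (by simp)).eq _ _

lemma dotProduct_hessianMatrix_mulVec (v : EuclideanSpace ℝ (Fin n)) :
    v ⬝ᵥ hessianMatrix u x *ᵥ v = fderiv ℝ (fderiv ℝ u) x v v := by
  rw [hessianMatrix, LinearMap.BilinForm.dotProduct_toMatrix_mulVec]
  have hv : (EuclideanSpace.basisFun (Fin n) ℝ).toBasis.equivFun.symm v = v :=
    (LinearEquiv.symm_apply_eq _).mpr (by ext; simp)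
  rw [hv, ContinuousLinearMap.toLinearMap₁₂_apply_apply_apply]

lemma mul_pow_le_hessianDet (hu : ContDiffAt ℝ 2 u x) (he : ‖e‖ = 1) (ha : 0 ≤ a) (hb : 0 < b)
    (hform : ∀ v, a * ⟪e, v⟫ ^ 2 + b * ‖(ℝ ∙ e)ᗮ.starProjection v‖ ^ 2 ≤
      fderiv ℝ (fderiv ℝ u) x v v) :
    a * b ^ (n - 1) ≤ hessianDet u x := by
  have hsub : (hessianMatrix u x - axialMatrix e a b).PosSemidef := by
    refine .of_dotProduct_mulVec_nonneg
      ((isHermitian_hessianMatrix hu).sub isHermitian_axialMatrix) fun v => ?_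
    rw [star_trivial, sub_mulVec, dotProduct_sub, sub_nonneg,
      dotProduct_axialMatrix_mulVec he (WithLp.toLp 2 v),
      dotProduct_hessianMatrix_mulVec (WithLp.toLp 2 v)]
    exact hform _
  calc a * b ^ (n - 1) = (axialMatrix e a b).det := by
        rw [det_axialMatrix he hb.ne', Fintype.card_fin]
    _ ≤ (hessianMatrix u x).det :=
        det_le_det_of_posSemidef (posSemidef_axialMatrix he ha hb.le) hsub
    _ = hessianDet u x := det_hessianMatrix

end HessianDeterminant

section SupportingHyperplane

open Metric

lemma inter_frontier_nonempty_of_isPreconnected {X : Type*} [TopologicalSpace X] {s t : Set X}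
    (ht : IsPreconnected t) (hts : (t ∩ s).Nonempty) (hts' : (t \ s).Nonempty) :
    (t ∩ frontier s).Nonempty := by
  by_contra! hempty
  have hcover : t ⊆ interior s ∪ (closure s)ᶜ := fun z hz =>
    or_iff_not_imp_left.mpr fun hint hcl => (hempty ▸ ⟨hz, hcl, hint⟩ : z ∈ (∅ : Set X))
  obtain ⟨x, hxt, hxs⟩ := hts
  obtain ⟨q, hqt, hqs⟩ := hts'
  have hx : x ∈ interior s :=
    (hcover hxt).resolve_right (Set.notMem_compl_iff.mpr (subset_closure hxs))
  have hsub : t ⊆ interior s :=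
    ht.subset_left_of_subset_union isOpen_interior isClosed_closure.isOpen_compl
      (Set.disjoint_compl_right_iff_subset.mpr interior_subset_closure) hcover ⟨x, hxt, hx⟩
  exact hqs (interior_subset (hsub hqt))

lemma infDist_frontier_le_dist {E : Type*} [SeminormedAddCommGroup E] [NormedSpace ℝ E]
    {Ω : Set E} {x q : E} (hx : x ∈ Ω) (hq : q ∉ Ω) : infDist x (frontier Ω) ≤ dist x q := by
  obtain ⟨z, hz, hzΩ⟩ : (segment ℝ x q ∩ frontier Ω).Nonempty :=
    inter_frontier_nonempty_of_isPreconnected (convex_segment x q).isPreconnected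
      ⟨x, left_mem_segment ℝ x q, hx⟩ ⟨q, right_mem_segment ℝ x q, hq⟩
  calc infDist x (frontier Ω) ≤ dist x z := infDist_le_dist_of_mem hzΩ
    _ ≤ dist x z + dist z q := le_add_of_nonneg_right dist_nonneg
    _ = dist x q := dist_add_dist_of_mem_segment hz

lemma norm_sub_le_of_mem_closure {E : Type*} [SeminormedAddCommGroup E] {Ω : Set E} {x p : E}
    {D : ℝ} (hbdd : Bornology.IsBounded Ω) (hdiam : diam Ω ≤ D) (hx : x ∈ closure Ω)
    (hp : p ∈ closure Ω) : ‖x - p‖ ≤ D := by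
  rw [← dist_eq_norm]
  exact (dist_le_diam_of_mem hbdd.closure hx hp).trans (diam_closure Ω ▸ hdiam)

lemma exists_mem_frontier_infDist_eq_dist {E : Type*} [NormedAddCommGroup E] [NormedSpace ℝ E]
    [ProperSpace E] [Nontrivial E] {Ω : Set E} (hbdd : Bornology.IsBounded Ω)
    (hne : Ω.Nonempty) (y : E) :
    ∃ p ∈ frontier Ω, infDist y (frontier Ω) = dist y p :=
  isClosed_frontier.exists_infDist_eq_dist
    (nonempty_frontier_iff.mpr ⟨hne, fun h => NormedSpace.unbounded_univ ℝ E (h ▸ hbdd)⟩) y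

variable {E : Type*} [NormedAddCommGroup E] [InnerProductSpace ℝ E] {Ω : Set E} {e p x : E}

lemma exists_norm_eq_one_forall_inner_sub_pos [CompleteSpace E] (hΩ : IsOpen Ω)
    (hconv : Convex ℝ Ω) (hne : Ω.Nonempty) (hp : p ∉ Ω) :
    ∃ e : E, ‖e‖ = 1 ∧ ∀ x ∈ Ω, 0 < ⟪e, x - p⟫ := by
  obtain ⟨f, hf⟩ := geometric_hahn_banach_point_open hconv hΩ hp
  set ν : E := (InnerProductSpace.toDual ℝ E).symm f
  have hν (x : E) (hx : x ∈ Ω) : 0 < ⟪ν, x - p⟫ := by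
    rw [InnerProductSpace.toDual_symm_apply, map_sub]
    exact sub_pos.mpr (hf x hx)
  have hν_ne : ν ≠ 0 := by
    rintro hzero
    obtain ⟨x, hx⟩ := hne
    simpa [hzero] using hν x hx
  refine ⟨‖ν‖⁻¹ • ν, norm_smul_inv_norm hν_ne, fun x hx => ?_⟩
  rw [real_inner_smul_left]
  exact mul_pos (inv_pos.mpr (norm_pos_iff.mpr hν_ne)) (hν x hx)

lemma infDist_frontier_le_inner_sub (he : ‖e‖ = 1) (hpos : ∀ z ∈ Ω, 0 < ⟪e, z - p⟫)
    (hx : x ∈ Ω) : infDist x (frontier Ω) ≤ ⟪e, x - p⟫ := by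
  have hfoot : x - ⟪e, x - p⟫ • e ∉ Ω := fun hmem => (hpos _ hmem).ne' <| by
    rw [sub_right_comm, inner_sub_right, real_inner_smul_right, real_inner_self_eq_norm_sq, he]
    ring
  calc infDist x (frontier Ω) ≤ dist x (x - ⟪e, x - p⟫ • e) := infDist_frontier_le_dist hx hfoot
    _ = ⟪e, x - p⟫ := by
      rw [dist_self_sub_right, norm_smul, he, mul_one, Real.norm_of_nonneg (hpos x hx).le]

lemma inner_sub_nonneg_of_mem_closure (hpos : ∀ z ∈ Ω, 0 < ⟪e, z - p⟫) (hx : x ∈ closure Ω) :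
    0 ≤ ⟪e, x - p⟫ :=
  have hclosed : IsClosed {z | 0 ≤ ⟪e, z - p⟫} := isClosed_le continuous_const (by fun_prop)
  closure_minimal (fun z hz => (hpos z hz).le) hclosed hx

end SupportingHyperplane

section Barrier

open Filter Topology

lemma deriv_deriv_affine_rpow_mul_quadratic {s : ℝ} (hs : 0 < s) (γ σ c₀ c₁ c₂ : ℝ) :
    deriv (deriv fun t => (s + t * σ) ^ γ * (c₀ + t * c₁ + t ^ 2 * c₂)) 0 =
      γ * (γ - 1) * s ^ (γ - 2) * σ ^ 2 * c₀ + 2 * γ * σ * s ^ (γ - 1) * c₁ + 2 * s ^ γ * c₂ := by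
  have hrpow (δ t : ℝ) (ht : 0 < s + t * σ) :
      HasDerivAt (fun t => (s + t * σ) ^ δ) (σ * δ * (s + t * σ) ^ (δ - 1)) t :=
    HasDerivAt.rpow_const (by simpa using ((hasDerivAt_id t).mul_const σ).const_add s) (.inl ht.ne')
  have hquad (t : ℝ) :
      HasDerivAt (fun t => c₀ + t * c₁ + t ^ 2 * c₂) (c₁ + 2 * t * c₂) t := by
    simpa using (((hasDerivAt_id t).mul_const c₁).const_add c₀).fun_add
      ((hasDerivAt_pow 2 t).mul_const c₂)
  have hlin (t : ℝ) : HasDerivAt (fun t => c₁ + 2 * t * c₂) (2 * c₂) t := by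
    simpa using (((hasDerivAt_id t).const_mul 2).mul_const c₂).const_add c₁
  have hpos : ∀ᶠ t in 𝓝 (0 : ℝ), 0 < s + t * σ :=
    (Continuous.tendsto' (by fun_prop) 0 s (by simp)).eventually_const_lt hs
  have hfirst : deriv (fun t => (s + t * σ) ^ γ * (c₀ + t * c₁ + t ^ 2 * c₂)) =ᶠ[𝓝 0] fun t =>
      σ * γ * (s + t * σ) ^ (γ - 1) * (c₀ + t * c₁ + t ^ 2 * c₂) +
        (s + t * σ) ^ γ * (c₁ + 2 * t * c₂) := by
    filter_upwards [hpos] with t ht using ((hrpow γ t ht).mul (hquad t)).deriv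
  have hsecond := (((hrpow (γ - 1) 0 hpos.self_of_nhds).const_mul (σ * γ)).mul (hquad 0)).add
    ((hrpow γ 0 hpos.self_of_nhds).mul (hlin 0))
  rw [hfirst.deriv_eq]
  refine hsecond.deriv.trans ?_
  simp only [zero_mul, mul_zero, add_zero, sub_sub, one_add_one_eq_two]
  ring

variable {E : Type*} [NormedAddCommGroup E] [InnerProductSpace ℝ E] {e p x : E}
  {M γ D : ℝ}

/-- The barrier `-M ℓ(x) ^ γ (K - |x_⊥|²)` in the half-space `ℓ > 0`, where `ℓ(x) = ⟪e, x - p⟫` is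
the height of `x` over the hyperplane through `p` with normal `e`, and `x_⊥` is the component of
`x - p` along that hyperplane. -/
noncomputable def barrier (e p : E) (M γ K : ℝ) (x : E) : ℝ :=
  -M * (⟪e, x - p⟫ ^ γ * (K - ‖(ℝ ∙ e)ᗮ.starProjection (x - p)‖ ^ 2))

/-- The value of `K` used in `barrier e p M γ K` on a domain within distance `D` of `p`: there
`K - |x_⊥|²` is at least the summand `G` with `γ (1 - γ) G = 4 γ² D² + 1`, which is what makes the
second derivative along `e` dominate the mixed ones. -/
noncomputable def barrierHeight (γ D : ℝ) : ℝ :=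
  D ^ 2 + (4 * γ ^ 2 * D ^ 2 + 1) / (γ * (1 - γ))

lemma barrierHeight_pos (hγ₀ : 0 < γ) (hγ₁ : γ < 1) (D : ℝ) : 0 < barrierHeight γ D := by
  have hγ : 0 < γ * (1 - γ) := mul_pos hγ₀ (sub_pos.mpr hγ₁)
  exact add_pos_of_nonneg_of_pos (sq_nonneg D) (div_pos (by positivity) hγ)

lemma continuous_barrier (hγ : 0 ≤ γ) (K : ℝ) : Continuous (barrier e p M γ K) := by
  have hrpow : Continuous fun x => ⟪e, x - p⟫ ^ γ :=
    Continuous.rpow_const (by fun_prop) fun _ => .inr hγ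
  exact continuous_const.mul (hrpow.mul (by fun_prop))

lemma contDiffAt_barrier {k : WithTop ℕ∞} (K : ℝ) (hx : ⟪e, x - p⟫ ≠ 0) :
    ContDiffAt ℝ k (barrier e p M γ K) x := by
  have hrpow : ContDiffAt ℝ k (fun x => ⟪e, x - p⟫ ^ γ) x :=
    (contDiffAt_const.inner ℝ (by fun_prop)).rpow_const_of_ne hx
  have hproj : ContDiffAt ℝ k (fun x => ‖(ℝ ∙ e)ᗮ.starProjection (x - p)‖ ^ 2) x :=
    ContDiffAt.norm_sq ℝ (by fun_prop)
  exact contDiffAt_const.mul (hrpow.mul (contDiffAt_const.sub hproj))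

lemma barrier_add_smul (K : ℝ) (v : E) (t : ℝ) :
    barrier e p M γ K (x + t • v) =
      -M * ((⟪e, x - p⟫ + t * ⟪e, v⟫) ^ γ * (K - ‖(ℝ ∙ e)ᗮ.starProjection (x - p)‖ ^ 2 +
        t * (-2 * ⟪(ℝ ∙ e)ᗮ.starProjection (x - p), (ℝ ∙ e)ᗮ.starProjection v⟫) +
        t ^ 2 * -‖(ℝ ∙ e)ᗮ.starProjection v‖ ^ 2)) := by
  rw [barrier, add_sub_right_comm, inner_add_right, real_inner_smul_right, map_add, map_smul,
    norm_add_sq_real, real_inner_smul_right, norm_smul, mul_pow, Real.norm_eq_abs, sq_abs]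
  ring

lemma fderiv_fderiv_barrier (K : ℝ) (hx : 0 < ⟪e, x - p⟫) (v : E) :
    fderiv ℝ (fderiv ℝ (barrier e p M γ K)) x v v =
      M * (γ * (1 - γ) * ⟪e, x - p⟫ ^ (γ - 2) * ⟪e, v⟫ ^ 2 *
          (K - ‖(ℝ ∙ e)ᗮ.starProjection (x - p)‖ ^ 2) +
        4 * γ * ⟪e, v⟫ * ⟪e, x - p⟫ ^ (γ - 1) *
          ⟪(ℝ ∙ e)ᗮ.starProjection (x - p), (ℝ ∙ e)ᗮ.starProjection v⟫ +
        2 * ⟪e, x - p⟫ ^ γ * ‖(ℝ ∙ e)ᗮ.starProjection v‖ ^ 2) := by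
  rw [← deriv_deriv_comp_add_smul (contDiffAt_barrier K hx.ne')]
  simp only [barrier_add_smul, deriv_const_mul_field',
    deriv_deriv_affine_rpow_mul_quadratic hx]
  ring

lemma norm_starProjection_sub_sq_le (hx : ‖x - p‖ ≤ D) :
    ‖(ℝ ∙ e)ᗮ.starProjection (x - p)‖ ^ 2 ≤ D ^ 2 :=
  pow_le_pow_left₀ (norm_nonneg _) (((ℝ ∙ e)ᗮ.norm_starProjection_apply_le _).trans hx) 2

lemma le_mul_barrierHeight_sub (hγ₀ : 0 < γ) (hγ₁ : γ < 1) (hx : ‖x - p‖ ≤ D) :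
    4 * γ ^ 2 * D ^ 2 + 1 ≤
      γ * (1 - γ) * (barrierHeight γ D - ‖(ℝ ∙ e)ᗮ.starProjection (x - p)‖ ^ 2) := by
  have hγ : 0 < γ * (1 - γ) := mul_pos hγ₀ (sub_pos.mpr hγ₁)
  rw [← div_le_iff₀' hγ, barrierHeight]
  linarith [norm_starProjection_sub_sq_le (e := e) hx]

lemma one_le_barrierHeight_sub (hγ₀ : 0 < γ) (hγ₁ : γ < 1) (hx : ‖x - p‖ ≤ D) :
    1 ≤ barrierHeight γ D - ‖(ℝ ∙ e)ᗮ.starProjection (x - p)‖ ^ 2 := by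
  have hγ : γ * (1 - γ) ≤ 1 := by nlinarith
  have hone : 1 ≤ (4 * γ ^ 2 * D ^ 2 + 1) / (γ * (1 - γ)) := by
    rw [one_le_div (mul_pos hγ₀ (sub_pos.mpr hγ₁))]
    exact hγ.trans (le_add_of_nonneg_left (by positivity))
  rw [barrierHeight]
  linarith [norm_starProjection_sub_sq_le (e := e) hx]

lemma barrier_le (hM : 0 ≤ M) (hγ₀ : 0 < γ) (hγ₁ : γ < 1) (hx : ‖x - p‖ ≤ D)
    (hx₀ : 0 ≤ ⟪e, x - p⟫) :
    barrier e p M γ (barrierHeight γ D) x ≤ -(M * ⟪e, x - p⟫ ^ γ) := by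
  have hs : 0 ≤ M * ⟪e, x - p⟫ ^ γ := mul_nonneg hM (Real.rpow_nonneg hx₀ γ)
  rw [barrier, neg_mul, neg_le_neg_iff, ← mul_assoc]
  exact le_mul_of_one_le_right hs (one_le_barrierHeight_sub hγ₀ hγ₁ hx)

lemma neg_mul_rpow_le_barrier (hM : 0 ≤ M) (K : ℝ) (hx₀ : 0 ≤ ⟪e, x - p⟫) :
    -(M * K * ⟪e, x - p⟫ ^ γ) ≤ barrier e p M γ K x := by
  have hs : 0 ≤ M * ⟪e, x - p⟫ ^ γ := mul_nonneg hM (Real.rpow_nonneg hx₀ γ)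
  rw [barrier, neg_mul, neg_le_neg_iff, ← mul_assoc, mul_right_comm M K]
  exact mul_le_mul_of_nonneg_left (sub_le_self _ (sq_nonneg _)) hs

lemma le_fderiv_fderiv_barrier (hM : 0 ≤ M) (hγ₀ : 0 < γ) (hγ₁ : γ < 1) (hx : ‖x - p‖ ≤ D)
    (hx₀ : 0 < ⟪e, x - p⟫) (v : E) :
    M * ⟪e, x - p⟫ ^ (γ - 2) * ⟪e, v⟫ ^ 2 +
        M * ⟪e, x - p⟫ ^ γ * ‖(ℝ ∙ e)ᗮ.starProjection v‖ ^ 2 ≤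
      fderiv ℝ (fderiv ℝ (barrier e p M γ (barrierHeight γ D))) x v v := by
  rw [fderiv_fderiv_barrier _ hx₀]
  have hy := norm_starProjection_sub_sq_le (e := e) hx
  have hheight := le_mul_barrierHeight_sub (e := e) hγ₀ hγ₁ hx
  set s := ⟪e, x - p⟫
  set σ := ⟪e, v⟫
  set y := (ℝ ∙ e)ᗮ.starProjection (x - p)
  set τ := (ℝ ∙ e)ᗮ.starProjection v
  have hpow_one : s ^ (γ - 1) = s ^ (γ - 2) * s := by
    rw [← Real.rpow_add_one hx₀.ne']
    ring_nf
  have hpow_two : s ^ γ = s ^ (γ - 2) * s ^ 2 := by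
    rw [← Real.rpow_add_natCast hx₀.ne']
    norm_num
  -- Completing the square absorbs the mixed term into the two pure second derivatives.
  have hsquare : 0 ≤ (2 * γ * σ) ^ 2 * ‖y‖ ^ 2 + 4 * γ * σ * s * ⟪y, τ⟫ + s ^ 2 * ‖τ‖ ^ 2 := by
    have hnorm := sq_nonneg ‖(2 * γ * σ) • y + s • τ‖
    rw [norm_add_sq_real, real_inner_smul_left, real_inner_smul_right, norm_smul, norm_smul,
      mul_pow, mul_pow, Real.norm_eq_abs, sq_abs, Real.norm_eq_abs, sq_abs] at hnorm
    linarith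
  have hbracket : σ ^ 2 + s ^ 2 * ‖τ‖ ^ 2 ≤
      γ * (1 - γ) * (barrierHeight γ D - ‖y‖ ^ 2) * σ ^ 2 + 4 * γ * σ * s * ⟪y, τ⟫ +
        2 * s ^ 2 * ‖τ‖ ^ 2 := by
    have hy' := mul_le_mul_of_nonneg_left hy (sq_nonneg (2 * γ * σ))
    have hheight' := mul_le_mul_of_nonneg_right hheight (sq_nonneg σ)
    linarith
  have hscale : 0 ≤ M * s ^ (γ - 2) := mul_nonneg hM (Real.rpow_nonneg hx₀.le _)
  rw [hpow_one, hpow_two]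
  linarith [mul_le_mul_of_nonneg_left hbracket hscale]

end Barrier

section Estimate

open Metric

variable {n : ℕ} {A M α β γ s d W : ℝ}

lemma mul_rpow_mul_pow_eq (hn : 0 < n) (hM : 0 < M) (hs : 0 < s)
    (hγ : γ * (n + α) = β - n + 1) :
    M * s ^ (γ - 2) * (M * s ^ γ) ^ (n - 1) =
      M ^ (n + α) * (s ^ (β - n - 1) * (M * s ^ γ) ^ (-α)) := by
  have hsγ : 0 < s ^ γ := Real.rpow_pos_of_pos hs γ
  have hbase : M * s ^ (γ - 2) = M * s ^ γ * s ^ (-2 : ℝ) := by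
    rw [mul_assoc, ← Real.rpow_add hs, sub_eq_add_neg]
  have hpow : (M * s ^ γ) ^ n = (M * s ^ γ) ^ (n + α) * (M * s ^ γ) ^ (-α) := by
    rw [← Real.rpow_add (by positivity), add_neg_cancel_right, Real.rpow_natCast]
  have hexp : (M * s ^ γ) ^ (n + α) * s ^ (-2 : ℝ) = M ^ (n + α) * s ^ (β - n - 1) := by
    rw [Real.mul_rpow hM.le hsγ.le, ← Real.rpow_mul hs.le, hγ, mul_assoc, ← Real.rpow_add hs]
    ring_nf
  calc M * s ^ (γ - 2) * (M * s ^ γ) ^ (n - 1) = (M * s ^ γ) ^ n * s ^ (-2 : ℝ) := by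
        rw [hbase, ← mul_pow_sub_one hn.ne' (M * s ^ γ)]
        ring
    _ = (M * s ^ γ) ^ (n + α) * s ^ (-2 : ℝ) * (M * s ^ γ) ^ (-α) := by rw [hpow]; ring
    _ = M ^ (n + α) * (s ^ (β - n - 1) * (M * s ^ γ) ^ (-α)) := by rw [hexp, mul_assoc]

lemma mul_rpow_mul_rpow_lt (hn : 0 < n) (hA : 0 ≤ A) (hAM : A < M) (hM : 1 ≤ M) (hα : 0 ≤ α)
    (hβ : n + 1 ≤ β) (hγ : γ * (n + α) = β - n + 1) (hs : 0 < s) (hd : 0 ≤ d) (hds : d ≤ s)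
    (hW : M * s ^ γ ≤ W) :
    A * d ^ (β - n - 1) * W ^ (-α) < M * s ^ (γ - 2) * (M * s ^ γ) ^ (n - 1) := by
  have hM₀ : 0 < M := one_pos.trans_le hM
  have hheight : 0 < M * s ^ γ := mul_pos hM₀ (Real.rpow_pos_of_pos hs γ)
  have hdist : d ^ (β - n - 1) ≤ s ^ (β - n - 1) := Real.rpow_le_rpow hd hds (by linarith)
  have hvalue : W ^ (-α) ≤ (M * s ^ γ) ^ (-α) :=
    Real.rpow_le_rpow_of_nonpos hheight hW (neg_nonpos.mpr hα)
  have hMpow : M ≤ M ^ (n + α) := by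
    have hn' : (1 : ℝ) ≤ n := mod_cast hn
    exact Real.self_le_rpow_of_one_le hM (by linarith)
  calc A * d ^ (β - n - 1) * W ^ (-α) ≤ A * (s ^ (β - n - 1) * (M * s ^ γ) ^ (-α)) := by
        rw [mul_assoc]
        have hW₀ : 0 ≤ W := hheight.le.trans hW
        gcongr
    _ < M ^ (n + α) * (s ^ (β - n - 1) * (M * s ^ γ) ^ (-α)) :=
        mul_lt_mul_of_pos_right (hAM.trans_le hMpow)
          (mul_pos (Real.rpow_pos_of_pos hs _) (Real.rpow_pos_of_pos hheight _))
    _ = M * s ^ (γ - 2) * (M * s ^ γ) ^ (n - 1) := (mul_rpow_mul_pow_eq hn hM₀ hs hγ).symm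

variable {Ω : Set (EuclideanSpace ℝ (Fin n))} {u : EuclideanSpace ℝ (Fin n) → ℝ}
  {e p x : EuclideanSpace ℝ (Fin n)} {D : ℝ}

lemma exists_fderiv_fderiv_lt_of_lt_barrier (hn : 0 < n) (hA : 0 ≤ A) (hAM : A < M)
    (hM : 1 ≤ M) (hα : 0 ≤ α) (hβ : n + 1 ≤ β) (hγ₀ : 0 < γ) (hγ₁ : γ < 1)
    (hγ : γ * (n + α) = β - n + 1) (he : ‖e‖ = 1) (hs : 0 < ⟪e, x - p⟫) (hD : ‖x - p‖ ≤ D)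
    (hd : 0 ≤ d) (hds : d ≤ ⟪e, x - p⟫) (hu : ContDiffAt ℝ 2 u x)
    (hdet : u x < 0 → hessianDet u x ≤ A * d ^ (β - n - 1) * |u x| ^ (-α))
    (hlt : u x < barrier e p M γ (barrierHeight γ D) x) :
    ∃ v, fderiv ℝ (fderiv ℝ u) x v v <
      fderiv ℝ (fderiv ℝ (barrier e p M γ (barrierHeight γ D))) x v v := by
  by_contra! hle
  have hM₀ : 0 < M := one_pos.trans_le hM
  have hsγ : 0 < M * ⟪e, x - p⟫ ^ γ := mul_pos hM₀ (Real.rpow_pos_of_pos hs γ)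
  have hux : u x < -(M * ⟪e, x - p⟫ ^ γ) := hlt.trans_le (barrier_le hM₀.le hγ₀ hγ₁ hD hs.le)
  have hneg : u x < 0 := hux.trans (neg_neg_iff_pos.mpr hsγ)
  have habs : M * ⟪e, x - p⟫ ^ γ ≤ |u x| := by
    rw [abs_of_neg hneg]
    exact (lt_neg_of_lt_neg hux).le
  have hlower : M * ⟪e, x - p⟫ ^ (γ - 2) * (M * ⟪e, x - p⟫ ^ γ) ^ (n - 1) ≤ hessianDet u x :=
    mul_pow_le_hessianDet hu he (mul_nonneg hM₀.le (Real.rpow_nonneg hs.le _)) hsγ fun v =>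
      (le_fderiv_fderiv_barrier hM₀.le hγ₀ hγ₁ hD hs v).trans (hle v)
  exact (hlower.trans (hdet hneg)).not_gt
    (mul_rpow_mul_rpow_lt hn hA hAM hM hα hβ hγ hs hd hds habs)

lemma barrier_le_of_hessianDet_le (hn : 0 < n) (hA : 0 ≤ A) (hAM : A < M) (hM : 1 ≤ M)
    (hα : 0 ≤ α) (hβ : n + 1 ≤ β) (hγ₀ : 0 < γ) (hγ₁ : γ < 1) (hγ : γ * (n + α) = β - n + 1)
    (hΩ : IsOpen Ω) (hbdd : Bornology.IsBounded Ω) (he : ‖e‖ = 1)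
    (hpos : ∀ x ∈ Ω, 0 < ⟪e, x - p⟫) (hD : ∀ x ∈ closure Ω, ‖x - p‖ ≤ D)
    (hu : ContinuousOn u (closure Ω)) (hu2 : ContDiffOn ℝ 2 u Ω)
    (hfrontier : ∀ x ∈ frontier Ω, 0 ≤ u x)
    (hdet : ∀ x ∈ Ω, u x < 0 →
      hessianDet u x ≤ A * infDist x (frontier Ω) ^ (β - n - 1) * |u x| ^ (-α)) :
    ∀ x ∈ Ω, barrier e p M γ (barrierHeight γ D) x ≤ u x := by
  have hM₀ : 0 ≤ M := zero_le_one.trans hM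
  have hbarrier : ∀ x ∈ frontier Ω, barrier e p M γ (barrierHeight γ D) x ≤ 0 := fun x hx => by
    have hx' : x ∈ closure Ω := frontier_subset_closure hx
    have hs : 0 ≤ ⟪e, x - p⟫ := inner_sub_nonneg_of_mem_closure hpos hx'
    exact (barrier_le hM₀ hγ₀ hγ₁ (hD x hx') hs).trans
      (neg_nonpos.mpr (mul_nonneg hM₀ (Real.rpow_nonneg hs γ)))
  exact le_of_forall_exists_fderiv_fderiv_lt hΩ hbdd hu
    (continuous_barrier hγ₀.le _).continuousOn hu2
    (fun x hx => (contDiffAt_barrier _ (hpos x hx).ne').contDiffWithinAt)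
    (fun x hx => (hbarrier x hx).trans (hfrontier x hx))
    fun x hx => exists_fderiv_fderiv_lt_of_lt_barrier hn hA hAM hM hα hβ hγ₀ hγ₁ hγ he
      (hpos x hx) (hD x (subset_closure hx)) infDist_nonneg
      (infDist_frontier_le_inner_sub he hpos hx) (hu2.contDiffAt (hΩ.mem_nhds hx)) (hdet x hx)

end Estimate

theorem pointwise_distance_bound_general (n : ℕ) (hn : 0 < n) (A α β D : ℝ) (hA : 0 ≤ A)
    (hα : 0 ≤ α) (hβ : n + 1 ≤ β) (hβ' : β < α + 2 * n - 1) :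
    ∃ C : ℝ, 0 < C ∧
      ∀ (Ω : Set (EuclideanSpace ℝ (Fin n))) (u : EuclideanSpace ℝ (Fin n) → ℝ),
        IsOpen Ω → Convex ℝ Ω → Bornology.IsBounded Ω → Metric.diam Ω ≤ D →
        ContinuousOn u (closure Ω) → ContDiffOn ℝ 2 u Ω → (∀ x ∈ frontier Ω, 0 ≤ u x) →
        (∀ x ∈ Ω, u x < 0 →
          hessianDet u x ≤ A * Metric.infDist x (frontier Ω) ^ (β - n - 1) * |u x| ^ (-α)) →
        ∀ y ∈ Ω, -(C * Metric.infDist y (frontier Ω) ^ ((β - n + 1) / (n + α))) ≤ u y := by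
  have hnα : 0 < n + α := by positivity
  set γ := (β - n + 1) / (n + α)
  have hγ : γ * (n + α) = β - n + 1 := div_mul_cancel₀ _ hnα.ne'
  have hγ₀ : 0 < γ := div_pos (by linarith) hnα
  have hγ₁ : γ < 1 := (div_lt_one hnα).mpr (by linarith)
  have hK : 0 < barrierHeight γ D := barrierHeight_pos hγ₀ hγ₁ D
  refine ⟨(A + 1) * barrierHeight γ D, by positivity, ?_⟩
  intro Ω u hΩ hconv hbdd hdiam hu hu2 hfrontier hdet y hy
  have : Nontrivial (EuclideanSpace ℝ (Fin n)) := by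
    have : Nonempty (Fin n) := Fin.pos_iff_nonempty.mp hn
    infer_instance
  obtain ⟨p, hp, hdist⟩ := exists_mem_frontier_infDist_eq_dist hbdd ⟨y, hy⟩ y
  have hpΩ : p ∉ Ω := (hΩ.frontier_eq ▸ hp).2
  obtain ⟨e, he, hpos⟩ := exists_norm_eq_one_forall_inner_sub_pos hΩ hconv ⟨y, hy⟩ hpΩ
  have hs : ⟪e, y - p⟫ ≤ Metric.infDist y (frontier Ω) := by
    simpa [hdist, dist_eq_norm, he] using real_inner_le_norm e (y - p)
  calc -((A + 1) * barrierHeight γ D * Metric.infDist y (frontier Ω) ^ γ)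
      ≤ -((A + 1) * barrierHeight γ D * ⟪e, y - p⟫ ^ γ) := by
        have := (hpos y hy).le
        gcongr
    _ ≤ barrier e p (A + 1) γ (barrierHeight γ D) y :=
        neg_mul_rpow_le_barrier (by positivity) _ (hpos y hy).le
    _ ≤ u y := barrier_le_of_hessianDet_le hn hA (lt_add_one A)
        (le_add_of_nonneg_left hA) hα hβ hγ₀ hγ₁ hγ hΩ hbdd he hpos
        (fun x hx => norm_sub_le_of_mem_closure hbdd hdiam hx (frontier_subset_closure hp))
        hu hu2 hfrontier hdet y hy

/-- Lemma 2.2 (pointwise form): `|u(y)| ≤ C d_y^{(β-n+1)/(n+α)}` with `C` depending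
only on `α, β, A, diam Ω` (through the bound `D`) and `n`. -/
theorem pointwise_distance_bound
    (n : ℕ) (hn : 2 ≤ n) (A α β D : ℝ) (hA : 0 < A) (hα : 0 ≤ α)
    (hβ : (n : ℝ) + 1 ≤ β) (hβ' : β < α + 2 * n - 1) :
    ∃ C : ℝ, 0 < C ∧
      ∀ (Ω : Set (EuclideanSpace ℝ (Fin n))) (F : EuclideanSpace ℝ (Fin n) → ℝ → ℝ)
        (u : EuclideanSpace ℝ (Fin n) → ℝ),
        IsOpen Ω → Convex ℝ Ω → Bornology.IsBounded Ω → Ω.Nonempty →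
        Metric.diam Ω ≤ D →
        SatisfiesFCond Ω F A α β →
        IsClassicalSolution Ω F u →
        ∀ y ∈ Ω, |u y| ≤ C * Metric.infDist y (frontier Ω) ^ ((β - n + 1) / (n + α)) := by
  obtain ⟨C, hC, hbound⟩ :=
    pointwise_distance_bound_general n (two_pos.trans_le hn) A α β D hA.le hα hβ hβ'
  refine ⟨C, hC, ?_⟩
  rintro Ω F u hΩ hconv hbdd - hdiam ⟨-, -, hF⟩ ⟨hu, -, hu2, hneg, hzero, hdet⟩ y hy
  rw [abs_of_neg (hneg y hy), neg_le]
  exact hbound Ω u hΩ hconv hbdd hdiam hu hu2 (fun x hx => (hzero x hx).ge)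
    (fun x hx hux => hdet x hx ▸ (hF x hx (u x) hux).2) y hy
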